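/- arXiv:2105.08183 — 4 statements merged into one kernel-verified Lean document; each statement's English description precedes it below -/
import Mathlib

section
/- Let q > 2 be a prime power and let r be the largest prime divisor of q² − q + 1. Then r ≥ 5 and gcd(r, q³(q−1)(q+1)²) = 1. -/
/-- **Lemma on the largest prime divisor of `q² − q + 1`:** if `q > 2` is a prime power
and `r` is the largest prime divisor of `q² − q + 1`, then `r ≥ 5` and
`gcd(r, q³(q−1)(q+1)²) = 1`. -/
theorem largest_prime_divisor_of_q_sq_sub_q_add_one
    (q : ℕ) (hq : ∃ p k : ℕ, p.Prime ∧ 0 < k ∧ q = p ^ k) (hq2 : 2 < q)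
    (r : ℕ) (hr : r.Prime) (hrdvd : r ∣ q ^ 2 - q + 1)
    (hrmax : ∀ s : ℕ, s.Prime → s ∣ q ^ 2 - q + 1 → s ≤ r) :
    5 ≤ r ∧ Nat.gcd r (q ^ 3 * (q - 1) * (q + 1) ^ 2) = 1 := by
  obtain ⟨m, rfl⟩ : ∃ m, q = m + 1 := ⟨q - 1, by omega⟩
  have hN : (m + 1) ^ 2 - (m + 1) + 1 = m * m + m + 1 := by
    have : (m + 1) ^ 2 = m * m + m + (m + 1) := by ring
    omega
  rw [hN] at hrdvd hrmax
  have h2 : ¬ 2 ∣ m * m + m + 1 := by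
    intro h
    have h' := Nat.mod_eq_zero_of_dvd h
    have : m % 2 = 0 ∨ m % 2 = 1 := by omega
    rcases this with h1 | h1 <;> simp [Nat.add_mod, Nat.mul_mod, h1] at h'
  have h9 : ¬ 9 ∣ m * m + m + 1 := by
    intro h
    have h' := Nat.mod_eq_zero_of_dvd h
    have : m % 9 < 9 := Nat.mod_lt _ (by norm_num)
    rw [Nat.add_mod, Nat.add_mod (m * m), Nat.mul_mod] at h'
    generalize m % 9 = a at *
    interval_cases a <;> simp at h'
  have small : ∀ s : ℕ, s.Prime → s < 5 → s = 2 ∨ s = 3 := by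
    intro s hs h5
    interval_cases s <;> first | omega | (exfalso; revert hs; norm_num)
  have h5 : 5 ≤ r := by
    by_contra hlt
    rcases small r hr (by omega) with rfl | rfl
    · exact h2 hrdvd
    · obtain ⟨t, ht⟩ := hrdvd
      have ht1 : t ≠ 1 := by
        rintro rfl
        nlinarith
      obtain ⟨s, hs, hst⟩ := Nat.exists_prime_and_dvd ht1
      have hsN : s ∣ m * m + m + 1 := ht ▸ hst.mul_left 3
      have hs3 := hrmax s hs hsN
      rcases small s hs (by omega) with rfl | rfl
      · exact h2 hsN
      · obtain ⟨u, rfl⟩ := hst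
        exact h9 ⟨u, by rw [ht]; ring⟩
  refine ⟨h5, ?_⟩
  change Nat.Coprime _ _
  rw [hr.coprime_iff_not_dvd]
  intro h
  rw [Nat.add_sub_cancel] at h
  have one : ¬ r ∣ 1 := hr.one_lt.ne' ∘ Nat.dvd_one.mp
  rcases hr.dvd_mul.mp h with h | h
  · rcases hr.dvd_mul.mp h with h | h
    · have h := hr.dvd_of_dvd_pow h
      apply one
      have h3 : r ∣ m * (m + 1) := h.mul_left m
      exact (Nat.dvd_add_right h3).mp (by convert hrdvd using 1; ring)
    · apply one
      have h3 : r ∣ m * (m + 1) := h.mul_right _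
      exact (Nat.dvd_add_right h3).mp (by convert hrdvd using 1; ring)
  · have h := hr.dvd_of_dvd_pow h
    have h3 : r ∣ (m + 1 + 1) * (m - 1) := h.mul_right _
    have h4 : r ∣ 3 := by
      refine (Nat.dvd_add_right h3).mp ?_
      convert hrdvd using 1
      obtain ⟨k, rfl⟩ : ∃ k, m = k + 1 := ⟨m - 1, by omega⟩
      rw [Nat.add_sub_cancel]
      ring
    have := Nat.le_of_dvd (by norm_num) h4
    omega
end

section
/- For every natural number q > 2, the integer q² − q + 1 is not a power of 3. (Indeed, q² − q + 1 is odd; 3 divides q² − q + 1 if and only if 3 divides q + 1; and in that case q² − q + 1 ≡ 3 (mod 9).) -/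
/-- For every natural number `q > 2`, the integer `q² − q + 1` is not a power of `3`. -/
theorem q_sq_sub_q_add_one_not_pow_three (q : ℕ) (hq : 2 < q) :
    ∀ k : ℕ, q ^ 2 - q + 1 ≠ 3 ^ k := by
  intro k h
  have hle : 3 * q ≤ q ^ 2 := by nlinarith
  have h1 : q ^ 2 + 1 = 3 ^ k + q := by omega
  match k, h1 with
  | 0, h1 => norm_num at h1; omega
  | 1, h1 => norm_num at h1; omega
  | k + 2, h1 =>
    have h2 : (q ^ 2 + 1) % 9 = q % 9 := by
      rw [h1, pow_add]; omega
    have h3 : q % 9 < 9 := Nat.mod_lt _ (by norm_num)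
    rw [Nat.add_mod, Nat.pow_mod] at h2
    generalize q % 9 = r at h2 h3
    interval_cases r <;> simp at h2
end

section
/- Let G be a finite noncyclic group and N a normal subgroup of G that is contained in every maximal subgroup of G. Then σ(G) = σ(G/N). -/
/-- The covering number `σ(G)`: the least cardinality of a set of proper subgroups of `G`
whose union is all of `G` (junk value `sInf ∅ = 0` if no such finite set exists). -/
noncomputable def coveringNumber (G : Type*) [Group G] : ℕ :=
  sInf {n : ℕ | ∃ C : Finset (Subgroup G), C.card = n ∧ (∀ H ∈ C, H ≠ ⊤) ∧
    ∀ g : G, ∃ H ∈ C, g ∈ H}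

/-- **Covering number and the Frattini-like condition:** if `G` is a finite noncyclic group
and `N` is a normal subgroup contained in every maximal subgroup of `G`, then
`σ(G) = σ(G/N)`. -/
theorem coveringNumber_eq_quotient_of_le_maximal
    (G : Type*) [Group G] [Finite G] (hG : ¬IsCyclic G)
    (N : Subgroup G) [N.Normal]
    (hN : ∀ H : Subgroup G, IsCoatom H → N ≤ H) :
    coveringNumber G = coveringNumber (G ⧸ N) := by
  classical
  have key : ∀ C : Finset (Subgroup G), (∀ H ∈ C, H ≠ ⊤) → (∀ g : G, ∃ H ∈ C, g ∈ H) →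
      ∃ D : Finset (Subgroup (G ⧸ N)), D.card ≤ C.card ∧ (∀ H ∈ D, H ≠ ⊤) ∧
        ∀ g : G ⧸ N, ∃ H ∈ D, g ∈ H := by
    intro C hC hcov
    refine ⟨C.image (Subgroup.map (QuotientGroup.mk' N)), Finset.card_image_le, ?_, ?_⟩
    · intro K hK htop
      obtain ⟨H, hH, rfl⟩ := Finset.mem_image.1 hK
      obtain ⟨M, hM, hHM⟩ := (eq_top_or_exists_le_coatom H).resolve_left (hC H hH)
      apply hM.1
      rw [eq_top_iff]
      intro g _
      have hg : QuotientGroup.mk' N g ∈ Subgroup.map (QuotientGroup.mk' N) H := by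
        rw [htop]; trivial
      obtain ⟨h, hh, e⟩ := hg
      have h1 : h⁻¹ * g ∈ N := QuotientGroup.eq.1 e
      have h2 := M.mul_mem (hHM hh) (hN M hM h1)
      simpa using h2
    · intro q
      obtain ⟨g, rfl⟩ := QuotientGroup.mk'_surjective N q
      obtain ⟨H, hH, hg⟩ := hcov g
      exact ⟨_, Finset.mem_image_of_mem _ hH, Subgroup.mem_map_of_mem _ hg⟩
  have ne : {n : ℕ | ∃ C : Finset (Subgroup G), C.card = n ∧ (∀ H ∈ C, H ≠ ⊤) ∧
      ∀ g : G, ∃ H ∈ C, g ∈ H}.Nonempty := by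
    have := Fintype.ofFinite G
    refine ⟨_, Finset.univ.image Subgroup.zpowers, rfl, ?_, ?_⟩
    · intro K hK htop
      obtain ⟨g, -, rfl⟩ := Finset.mem_image.1 hK
      exact hG ⟨g, fun x => by
        have hx : x ∈ Subgroup.zpowers g := by rw [htop]; trivial
        exact hx⟩
    · intro g
      exact ⟨_, Finset.mem_image_of_mem _ (Finset.mem_univ g), Subgroup.mem_zpowers g⟩
  obtain ⟨C, hCc, hC, hcov⟩ := Nat.sInf_mem ne
  obtain ⟨D, hDc, hD, hDcov⟩ := key C hC hcov
  apply le_antisymm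
  · have ne' : {n : ℕ | ∃ C : Finset (Subgroup (G ⧸ N)), C.card = n ∧ (∀ H ∈ C, H ≠ ⊤) ∧
        ∀ g : G ⧸ N, ∃ H ∈ C, g ∈ H}.Nonempty := ⟨_, D, rfl, hD, hDcov⟩
    obtain ⟨E, hEc, hE, hEcov⟩ := Nat.sInf_mem ne'
    refine le_trans (Nat.sInf_le ⟨E.image (Subgroup.comap (QuotientGroup.mk' N)), rfl, ?_, ?_⟩)
      (Finset.card_image_le.trans hEc.le)
    · intro K hK htop
      obtain ⟨H, hH, rfl⟩ := Finset.mem_image.1 hK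
      apply hE H hH
      rw [eq_top_iff]
      intro q _
      obtain ⟨g, rfl⟩ := QuotientGroup.mk'_surjective N q
      have hg : g ∈ Subgroup.comap (QuotientGroup.mk' N) H := by rw [htop]; trivial
      exact hg
    · intro g
      obtain ⟨H, hH, hg⟩ := hEcov (QuotientGroup.mk' N g)
      exact ⟨_, Finset.mem_image_of_mem _ hH, hg⟩
  · exact le_trans (Nat.sInf_le ⟨D, rfl, hD, hDcov⟩) (hDc.trans hCc.le)
end

section
/- Let G be a finite nontrivial perfect group and let Z be the center of G. Then σ(G) = σ(G/Z). -/
theorem sInf_le_of_dominated {A B : Set ℕ} (h1 : ∀ n ∈ A, ∃ m ∈ B, m ≤ n)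
    (h2 : ∀ n ∈ B, ∃ m ∈ A, m ≤ n) : sInf A ≤ sInf B := by
  rcases B.eq_empty_or_nonempty with hB | hB
  · have hA : A = ∅ := by
      rw [Set.eq_empty_iff_forall_notMem]
      intro n hn
      obtain ⟨m, hm, _⟩ := h1 n hn
      simp [hB] at hm
    simp [hA, hB]
  · obtain ⟨m, hm, hle⟩ := h2 _ (Nat.sInf_mem hB)
    exact (Nat.sInf_le hm).trans hle

open scoped commutatorElement in
theorem commutator_mul_central {G : Type*} [Group G] (a b z w : G)
    (hz : z ∈ Subgroup.center G) (hw : w ∈ Subgroup.center G) :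
    ⁅a * z, b * w⁆ = ⁅a, b⁆ := by
  rw [Subgroup.mem_center_iff] at hz hw
  have e1 : ⁅a * z, b * w⁆ = a * (z * (b * w) * z⁻¹) * a⁻¹ * (b * w)⁻¹ := by
    rw [commutatorElement_def]; group
  have e2 : z * (b * w) * z⁻¹ = b * w := by rw [← hz]; group
  have e3 : a * (b * w) * a⁻¹ * (b * w)⁻¹ = a * b * (w * a⁻¹) * w⁻¹ * b⁻¹ := by group
  rw [e1, e2, e3, ← hw, commutatorElement_def]; group

theorem eq_top_of_map_eq_top {G : Type*} [Group G] (hG : commutator G = ⊤) (H : Subgroup G)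
    (h : H.map (QuotientGroup.mk' (Subgroup.center G)) = ⊤) : H = ⊤ := by
  have key : ∀ g : G, ∃ a ∈ H, ∃ z ∈ Subgroup.center G, g = a * z := by
    intro g
    have hg : QuotientGroup.mk' (Subgroup.center G) g ∈
        H.map (QuotientGroup.mk' (Subgroup.center G)) := by rw [h]; trivial
    obtain ⟨a, ha, e⟩ := hg
    exact ⟨a, ha, a⁻¹ * g, QuotientGroup.eq.mp e, by group⟩
  rw [eq_top_iff, ← hG, commutator_def, Subgroup.commutator_le]
  intro g _ k _
  obtain ⟨a, ha, z, hz, rfl⟩ := key g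
  obtain ⟨b, hb, w, hw, rfl⟩ := key k
  rw [commutator_mul_central a b z w hz hw, commutatorElement_def]
  exact H.mul_mem (H.mul_mem (H.mul_mem ha hb) (H.inv_mem ha)) (H.inv_mem hb)

/-- **Covering number of a perfect group:** if `G` is a finite nontrivial perfect group
and `Z` is its center, then `σ(G) = σ(G/Z)`. -/
theorem coveringNumber_eq_quotient_center_of_perfect
    (G : Type*) [Group G] [Finite G] [Nontrivial G] (hG : commutator G = ⊤) :
    coveringNumber G = coveringNumber (G ⧸ Subgroup.center G) := by
  classical
  have hs : Function.Surjective (QuotientGroup.mk' (Subgroup.center G)) :=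
    QuotientGroup.mk'_surjective _
  unfold coveringNumber
  have hA : ∀ n ∈ {n : ℕ | ∃ C : Finset (Subgroup G), C.card = n ∧ (∀ H ∈ C, H ≠ ⊤) ∧
      ∀ g : G, ∃ H ∈ C, g ∈ H},
      ∃ m ∈ {n : ℕ | ∃ C : Finset (Subgroup (G ⧸ Subgroup.center G)), C.card = n ∧
        (∀ H ∈ C, H ≠ ⊤) ∧ ∀ g : G ⧸ Subgroup.center G, ∃ H ∈ C, g ∈ H}, m ≤ n := by
    rintro n ⟨C, rfl, hC, hcov⟩
    refine ⟨_, ⟨C.image (Subgroup.map (QuotientGroup.mk' (Subgroup.center G))), rfl, ?_, ?_⟩,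
      Finset.card_image_le⟩
    · intro K hK e
      obtain ⟨H, hH, rfl⟩ := Finset.mem_image.mp hK
      exact hC H hH (eq_top_of_map_eq_top hG H e)
    · intro q
      obtain ⟨g, rfl⟩ := hs q
      obtain ⟨H, hH, hg⟩ := hcov g
      exact ⟨_, Finset.mem_image_of_mem _ hH, Subgroup.mem_map_of_mem _ hg⟩
  have hB : ∀ n ∈ {n : ℕ | ∃ C : Finset (Subgroup (G ⧸ Subgroup.center G)), C.card = n ∧
        (∀ H ∈ C, H ≠ ⊤) ∧ ∀ g : G ⧸ Subgroup.center G, ∃ H ∈ C, g ∈ H},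
      ∃ m ∈ {n : ℕ | ∃ C : Finset (Subgroup G), C.card = n ∧ (∀ H ∈ C, H ≠ ⊤) ∧
      ∀ g : G, ∃ H ∈ C, g ∈ H}, m ≤ n := by
    rintro n ⟨C, rfl, hC, hcov⟩
    refine ⟨_, ⟨C.image (Subgroup.comap (QuotientGroup.mk' (Subgroup.center G))), rfl, ?_, ?_⟩,
      Finset.card_image_le⟩
    · intro K hK e
      obtain ⟨H, hH, rfl⟩ := Finset.mem_image.mp hK
      apply hC H hH
      rw [← Subgroup.map_comap_eq_self_of_surjective hs H, e]
      exact Subgroup.map_top_of_surjective _ hs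
    · intro g
      obtain ⟨H, hH, hg⟩ := hcov (QuotientGroup.mk' (Subgroup.center G) g)
      exact ⟨_, Finset.mem_image_of_mem _ hH, hg⟩
  exact le_antisymm (sInf_le_of_dominated hA hB) (sInf_le_of_dominated hB hA)
end
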